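/- Supersolutions dominate the boundary data when a Lipschitz solution exists: Let Ω ⊂ ℝⁿ be a bounded, open, uniformly convex domain, g : ∂Ω → ℝ continuous, and f : Ω̄ × ℝ × ℝⁿ → ℝ continuous. Assume the classical comparison principle holds: for every bounded upper semicontinuous viscosity subsolution u' and bounded lower semicontinuous viscosity supersolution v' of −det⁺(D²u) + f(x,u,∇u) = 0 in Ω, one has max_{Ω̄}(u' − v') ≤ max_{∂Ω}(u' − v')⁺. Suppose there exists a convex Lipschitz continuous function u : Ω̄ → ℝ that is a viscosity solution of the interior equation and satisfies u = g on ∂Ω. Then every bounded lower semicontinuous viscosity supersolution w of the generalized Dirichlet problem satisfies w(x) ≥ g(x) for all x ∈ ∂Ω. -/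

import Mathlib

/-!
The comparison principle, applied to `u` and `w`, shows that the maximum of `u - w` over
`closure Ω` is attained on the boundary as soon as `w < g` somewhere on `frontier Ω`; equivalently
`w - u` then has a minimum over `closure Ω` at some boundary point `x₀` with `w x₀ < g x₀`.

At `x₀` a convex Lipschitz function has a subgradient `p` (`exists_subgradient`), and `Ω` has a unit
outward normal `ν` (`exists_unit_normal`). Uniform convexity gives `⟪ν, x - x₀⟫ ≤ -α‖x - x₀‖²`, so
near `x₀` the linear function `⟪ν, x - x₀⟫` is so negative on `closure Ω` that it may be increased
by `(α/2)‖x - x₀‖² + (C/2)⟪ν, x - x₀⟫²`, for any `C`, and still stay nonpositive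
(`linear_add_quadratic_nonpos`). Hence
`φ x = ⟪p + ν, x - x₀⟫ + (α/2)‖x - x₀‖² + (C/2)⟪ν, x - x₀⟫²`
touches `w` from below at `x₀` up to a constant. Its gradient `p + ν` at `x₀` does not depend on
`C`, while its Hessian `α I + C ν νᵀ` has determinant `αⁿ(1 + C/α)`, which exceeds
`f x₀ (w x₀) (p + ν)` for large `C`. Since also `w x₀ < g x₀`, this contradicts the supersolution
condition at `x₀`.
-/

open scoped RealInnerProductSpace Classical

/-- `det⁺(X) = det X` if `X` is positive semidefinite, and `-1` otherwise. -/
noncomputable def detPlus {n : ℕ} (X : Matrix (Fin n) (Fin n) ℝ) : ℝ :=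
  if X.PosSemidef then X.det else -1

/-- The Hessian matrix of `φ : ℝⁿ → ℝ` at `x`, given by the second iterated derivative. -/
noncomputable def hessianMatrix {n : ℕ} (φ : EuclideanSpace ℝ (Fin n) → ℝ)
    (x : EuclideanSpace ℝ (Fin n)) : Matrix (Fin n) (Fin n) ℝ :=
  Matrix.of fun i j =>
    iteratedFDeriv ℝ 2 φ x ![EuclideanSpace.single i 1, EuclideanSpace.single j 1]

/-- Lower envelope `F_*` of the generalized Dirichlet Monge–Ampère operator. -/
noncomputable def MALower {n : ℕ} (Ω : Set (EuclideanSpace ℝ (Fin n)))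
    (f : EuclideanSpace ℝ (Fin n) → ℝ → EuclideanSpace ℝ (Fin n) → ℝ)
    (g : EuclideanSpace ℝ (Fin n) → ℝ)
    (x : EuclideanSpace ℝ (Fin n)) (u : ℝ) (p : EuclideanSpace ℝ (Fin n))
    (X : Matrix (Fin n) (Fin n) ℝ) : ℝ :=
  if x ∈ Ω then -detPlus X + f x u p
  else min (u - g x) (-detPlus X + f x u p)

/-- Upper envelope `F^*` of the generalized Dirichlet Monge–Ampère operator. -/
noncomputable def MAUpper {n : ℕ} (Ω : Set (EuclideanSpace ℝ (Fin n)))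
    (f : EuclideanSpace ℝ (Fin n) → ℝ → EuclideanSpace ℝ (Fin n) → ℝ)
    (g : EuclideanSpace ℝ (Fin n) → ℝ)
    (x : EuclideanSpace ℝ (Fin n)) (u : ℝ) (p : EuclideanSpace ℝ (Fin n))
    (X : Matrix (Fin n) (Fin n) ℝ) : ℝ :=
  if x ∈ Ω then -detPlus X + f x u p
  else max (u - g x) (-detPlus X + f x u p)

/-- Viscosity subsolution of the generalized Dirichlet problem on `closure Ω`. -/
def IsViscositySubsolution {n : ℕ} (Ω : Set (EuclideanSpace ℝ (Fin n)))
    (f : EuclideanSpace ℝ (Fin n) → ℝ → EuclideanSpace ℝ (Fin n) → ℝ)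
    (g : EuclideanSpace ℝ (Fin n) → ℝ)
    (v : EuclideanSpace ℝ (Fin n) → ℝ) : Prop :=
  UpperSemicontinuousOn v (closure Ω) ∧
  ∀ φ : EuclideanSpace ℝ (Fin n) → ℝ, ContDiff ℝ 2 φ →
    ∀ x₀ ∈ closure Ω, IsLocalMaxOn (fun x => v x - φ x) (closure Ω) x₀ →
      MALower Ω f g x₀ (v x₀) (gradient φ x₀) (hessianMatrix φ x₀) ≤ 0

/-- Viscosity supersolution of the generalized Dirichlet problem on `closure Ω`. -/
def IsViscositySupersolution {n : ℕ} (Ω : Set (EuclideanSpace ℝ (Fin n)))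
    (f : EuclideanSpace ℝ (Fin n) → ℝ → EuclideanSpace ℝ (Fin n) → ℝ)
    (g : EuclideanSpace ℝ (Fin n) → ℝ)
    (w : EuclideanSpace ℝ (Fin n) → ℝ) : Prop :=
  LowerSemicontinuousOn w (closure Ω) ∧
  ∀ φ : EuclideanSpace ℝ (Fin n) → ℝ, ContDiff ℝ 2 φ →
    ∀ x₀ ∈ closure Ω, IsLocalMinOn (fun x => w x - φ x) (closure Ω) x₀ →
      0 ≤ MAUpper Ω f g x₀ (w x₀) (gradient φ x₀) (hessianMatrix φ x₀)

/-- A bounded open convex set is uniformly convex if every supporting hyperplane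
separates quadratically. -/
def UniformlyConvexDomain {n : ℕ} (Ω : Set (EuclideanSpace ℝ (Fin n))) : Prop :=
  ∀ x₀ ∈ frontier Ω, ∀ ν : EuclideanSpace ℝ (Fin n), ‖ν‖ = 1 →
    (∀ x ∈ closure Ω, ⟪ν, x - x₀⟫ ≤ 0) →
    ∃ α > 0, ∀ x ∈ closure Ω, ⟪ν, x - x₀⟫ ≤ -α * ‖x - x₀‖ ^ 2

/-- Interior viscosity subsolution of `-det⁺(D²u) + f(x,u,∇u) = 0` in `Ω`. -/
def IsInteriorSubsolution {n : ℕ} (Ω : Set (EuclideanSpace ℝ (Fin n)))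
    (f : EuclideanSpace ℝ (Fin n) → ℝ → EuclideanSpace ℝ (Fin n) → ℝ)
    (v : EuclideanSpace ℝ (Fin n) → ℝ) : Prop :=
  UpperSemicontinuousOn v (closure Ω) ∧
  ∀ φ : EuclideanSpace ℝ (Fin n) → ℝ, ContDiff ℝ 2 φ →
    ∀ x₀ ∈ Ω, IsLocalMaxOn (fun x => v x - φ x) Ω x₀ →
      -detPlus (hessianMatrix φ x₀) + f x₀ (v x₀) (gradient φ x₀) ≤ 0

/-- Interior viscosity supersolution of `-det⁺(D²u) + f(x,u,∇u) = 0` in `Ω`. -/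
def IsInteriorSupersolution {n : ℕ} (Ω : Set (EuclideanSpace ℝ (Fin n)))
    (f : EuclideanSpace ℝ (Fin n) → ℝ → EuclideanSpace ℝ (Fin n) → ℝ)
    (w : EuclideanSpace ℝ (Fin n) → ℝ) : Prop :=
  LowerSemicontinuousOn w (closure Ω) ∧
  ∀ φ : EuclideanSpace ℝ (Fin n) → ℝ, ContDiff ℝ 2 φ →
    ∀ x₀ ∈ Ω, IsLocalMinOn (fun x => w x - φ x) Ω x₀ →
      0 ≤ -detPlus (hessianMatrix φ x₀) + f x₀ (w x₀) (gradient φ x₀)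

/-- A convex Lipschitz function has a subgradient at every point of its domain, boundary points
included. The Lipschitz bound makes the open cone `t < u x₀ - K‖y - x₀‖` disjoint from the epigraph,
and a hyperplane separating the two is not vertical. -/
lemma exists_subgradient {E : Type*} [NormedAddCommGroup E] [InnerProductSpace ℝ E]
    [CompleteSpace E] {S : Set E} {u : E → ℝ} {K : NNReal} (hu : ConvexOn ℝ S u)
    (hK : LipschitzOnWith K u S) {x₀ : E} (hx₀ : x₀ ∈ S) :
    ∃ p : E, ∀ x ∈ S, u x₀ + ⟪p, x - x₀⟫ ≤ u x := by
  let B : Set (E × ℝ) := {q | q.1 ∈ Set.univ ∧ q.2 < u x₀ - K * ‖q.1 - x₀‖}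
  have hBopen : IsOpen B := by
    have : B = {q : E × ℝ | q.2 < u x₀ - K * ‖q.1 - x₀‖} := by ext; simp [B]
    rw [this]
    exact isOpen_lt (by fun_prop) (by fun_prop)
  have hBconv : Convex ℝ B := by
    have h1 : ConvexOn ℝ Set.univ (fun y : E => ‖y - x₀‖) := by
      simpa [dist_eq_norm] using convexOn_univ_dist (E := E) x₀
    have h2 : ConcaveOn ℝ Set.univ (fun y : E => u x₀ - K * ‖y - x₀‖) :=
      (concaveOn_const (u x₀) convex_univ).sub (h1.smul (c := (K : ℝ)) K.2)
    exact h2.convex_strict_hypograph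
  have hdisj : Disjoint B {q : E × ℝ | q.1 ∈ S ∧ u q.1 ≤ q.2} := by
    rw [Set.disjoint_left]
    rintro ⟨y, t⟩ ⟨-, ht⟩ ⟨hy, hyt⟩
    have h := hK.dist_le_mul x₀ hx₀ y hy
    rw [Real.dist_eq, dist_comm, dist_eq_norm] at h
    have := (abs_le.1 h).2
    simp only at ht hyt
    linarith
  obtain ⟨L, s, hB, hA⟩ := geometric_hahn_banach_open hBconv hBopen hu.convex_epigraph hdisj
  have hdecomp : ∀ (y : E) (t : ℝ), L (y, t) = L (y, 0) + t * L (0, 1) := by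
    intro y t
    have : ((y, t) : E × ℝ) = (y, 0) + t • (0, 1) := by simp
    conv_lhs => rw [this]
    rw [map_add, map_smul, smul_eq_mul]
  set c := L (0, 1) with hc
  have hcone : ∀ ε > 0, L (x₀, 0) + (u x₀ - ε) * c < s := fun ε hε => by
    rw [← hdecomp]
    exact hB _ ⟨trivial, by simpa using hε⟩
  have hepi : ∀ y ∈ S, s ≤ L (y, 0) + u y * c := fun y hy => by
    rw [← hdecomp]
    exact hA _ ⟨hy, le_rfl⟩
  have hcpos : 0 < c := by
    have h1 := hcone 1 one_pos
    have h2 := hepi x₀ hx₀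
    linarith
  have hle : L (x₀, 0) + u x₀ * c ≤ s := by
    refine le_of_forall_pos_le_add fun ε hε => ?_
    have := hcone (ε / c) (div_pos hε hcpos)
    rw [sub_mul, div_mul_cancel₀ _ hcpos.ne'] at this
    linarith
  let l : StrongDual ℝ E := -(c⁻¹ • L.comp (ContinuousLinearMap.inl ℝ E ℝ))
  refine ⟨(InnerProductSpace.toDual ℝ E).symm l, fun x hx => ?_⟩
  rw [InnerProductSpace.toDual_symm_apply]
  have h1 := hepi x hx
  have h2 : l (x - x₀) = -(c⁻¹ * (L (x, 0) - L (x₀, 0))) := by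
    simp only [l, map_sub]
    simp
    ring
  rw [h2]
  have h3 : (u x₀ - u x) ≤ c⁻¹ * (L (x, 0) - L (x₀, 0)) := by
    rw [inv_mul_eq_div, le_div_iff₀ hcpos]
    linarith
  linarith

/-- A nonempty open convex set has a unit outward normal at every point outside it. -/
lemma exists_unit_normal {E : Type*} [NormedAddCommGroup E] [InnerProductSpace ℝ E]
    [CompleteSpace E] {Ω : Set E} (hopen : IsOpen Ω) (hconv : Convex ℝ Ω) (hne : Ω.Nonempty)
    {x₀ : E} (hx₀ : x₀ ∉ Ω) :
    ∃ ν : E, ‖ν‖ = 1 ∧ ∀ x ∈ closure Ω, ⟪ν, x - x₀⟫ ≤ 0 := by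
  obtain ⟨L, hL⟩ := geometric_hahn_banach_open_point hconv hopen hx₀
  set v := (InnerProductSpace.toDual ℝ E).symm L with hv
  have hLv : ∀ y, ⟪v, y⟫ = L y := fun y => InnerProductSpace.toDual_symm_apply
  have hv0 : v ≠ 0 := by
    rintro h0
    obtain ⟨a, ha⟩ := hne
    have := hL a ha
    rw [← hLv, ← hLv, h0] at this
    simp at this
  refine ⟨‖v‖⁻¹ • v, norm_smul_inv_norm (𝕜 := ℝ) hv0, fun x hx => ?_⟩
  have hclosed : IsClosed {x | ⟪v, x - x₀⟫ ≤ 0} := isClosed_le (by fun_prop) continuous_const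
  have hsub : closure Ω ⊆ {x | ⟪v, x - x₀⟫ ≤ 0} := closure_minimal (fun a ha => by
    have := hL a ha
    rw [Set.mem_ofPred_eq, inner_sub_right, hLv, hLv]
    linarith) hclosed
  rw [real_inner_smul_left]
  exact mul_nonpos_of_nonneg_of_nonpos (by positivity) (hsub hx)

/-- With `s = ⟪ν, x - x₀⟫` and `r = ‖x - x₀‖`: half of `|s|` absorbs the isotropic quadratic term
by uniform convexity, the other half absorbs the term in the normal direction when `s` is small. -/
lemma linear_add_quadratic_nonpos {α C s r : ℝ} (hα : 0 < α) (hs : s ≤ -α * r ^ 2)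
    (hC : C * |s| ≤ 1) : s + (α / 2 * r ^ 2 + C / 2 * s ^ 2) ≤ 0 := by
  have hs0 : s ≤ 0 := by nlinarith [sq_nonneg r, mul_nonneg hα.le (sq_nonneg r)]
  rw [abs_of_nonpos hs0] at hC
  nlinarith

/-- The test function: a linear part with slope `q`, an isotropic quadratic, and an additional
quadratic in the direction `ν`. -/
noncomputable def testFn {E : Type*} [NormedAddCommGroup E] [InnerProductSpace ℝ E]
    (q ν x₀ : E) (a C : ℝ) (x : E) : ℝ :=
  ⟪q, x - x₀⟫ + (a / 2 * ‖x - x₀‖ ^ 2 + C / 2 * ⟪ν, x - x₀⟫ ^ 2)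

lemma testFn_contDiff {E : Type*} [NormedAddCommGroup E] [InnerProductSpace ℝ E]
    (q ν x₀ : E) (a C : ℝ) : ContDiff ℝ 2 (testFn q ν x₀ a C) := by
  have h : ContDiff ℝ 2 fun x : E => x - x₀ := contDiff_id.sub contDiff_const
  unfold testFn
  exact (contDiff_const.inner ℝ h).add ((contDiff_const.mul (h.norm_sq ℝ)).add
    (contDiff_const.mul ((contDiff_const.inner ℝ h).pow 2)))

lemma hasFDerivAt_clm_sub {E F : Type*} [NormedAddCommGroup E] [NormedSpace ℝ E]
    [NormedAddCommGroup F] [NormedSpace ℝ F] (L : E →L[ℝ] F) (x₀ x : E) :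
    HasFDerivAt (fun y => L (y - x₀)) L x := by
  have := (L.hasFDerivAt (x := x)).sub_const (L x₀)
  simpa only [map_sub] using this

lemma testFn_hasFDerivAt {E : Type*} [NormedAddCommGroup E] [InnerProductSpace ℝ E]
    (q ν x₀ : E) (a C : ℝ) (x : E) :
    HasFDerivAt (testFn q ν x₀ a C)
      (innerSL ℝ q + a • innerSL ℝ (x - x₀) + (C * ⟪ν, x - x₀⟫) • innerSL ℝ ν) x := by
  have h : HasFDerivAt (fun x : E => x - x₀) (ContinuousLinearMap.id ℝ E) x :=
    (hasFDerivAt_id x).sub_const x₀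
  have hin : ∀ v : E, HasFDerivAt (fun x : E => ⟪v, x - x₀⟫) (innerSL ℝ v) x := fun v =>
    hasFDerivAt_clm_sub (innerSL ℝ v) x₀ x
  have := (hin q).add ((h.norm_sq.const_mul (a / 2)).add (((hin ν).pow 2).const_mul (C / 2)))
  refine this.congr_fderiv ?_
  ext y
  simp
  ring

lemma testFn_gradient {n : ℕ} (q ν x₀ : EuclideanSpace ℝ (Fin n)) (a C : ℝ) :
    gradient (testFn q ν x₀ a C) x₀ = q := by
  refine HasGradientAt.gradient ?_
  rw [hasGradientAt_iff_hasFDerivAt]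
  refine (testFn_hasFDerivAt q ν x₀ a C x₀).congr_fderiv ?_
  ext y
  simp

lemma testFn_hessian {n : ℕ} (q ν x₀ : EuclideanSpace ℝ (Fin n)) (a C : ℝ) :
    hessianMatrix (testFn q ν x₀ a C) x₀ =
      a • (1 : Matrix (Fin n) (Fin n) ℝ) + C • Matrix.vecMulVec ν ν := by
  have h1 : fderiv ℝ (testFn q ν x₀ a C) = fun x =>
      innerSL ℝ q + a • innerSL ℝ (x - x₀) + (C * ⟪ν, x - x₀⟫) • innerSL ℝ ν :=
    funext fun x => (testFn_hasFDerivAt q ν x₀ a C x).fderiv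
  have h2 := hasFDerivAt_clm_sub (innerSL ℝ (E := EuclideanSpace ℝ (Fin n))) x₀ x₀
  have h3 := hasFDerivAt_clm_sub (innerSL ℝ ν) x₀ x₀
  have h4 := ((h2.const_smul a).const_add (innerSL ℝ q)).add
    ((h3.const_mul C).smul_const (innerSL ℝ ν))
  have h5 : ∀ v y, fderiv ℝ (fderiv ℝ (testFn q ν x₀ a C)) x₀ v y =
      a * ⟪v, y⟫ + C * ⟪ν, v⟫ * ⟪ν, y⟫ := fun v y => by
    rw [h1]
    refine (congrArg (fun T => T v y) h4.fderiv).trans ?_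
    simp
    exact Or.inl rfl
  ext i j
  simp only [hessianMatrix, Matrix.of_apply, iteratedFDeriv_two_apply]
  refine (h5 _ _).trans ?_
  simp [Matrix.one_apply, Matrix.vecMulVec_apply, EuclideanSpace.inner_single_right, eq_comm,
    mul_assoc]

/-- The matrix determinant lemma for the Hessian `a I + C ν νᵀ`. -/
lemma detPlus_rank_one {n : ℕ} (ν : EuclideanSpace ℝ (Fin n)) (hν : ‖ν‖ = 1) {a C : ℝ}
    (ha : 0 < a) (hC : 0 ≤ C) :
    detPlus (a • (1 : Matrix (Fin n) (Fin n) ℝ) + C • Matrix.vecMulVec ν ν) =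
      a ^ n * (1 + C / a) := by
  have hpsd : (a • (1 : Matrix (Fin n) (Fin n) ℝ) + C • Matrix.vecMulVec ν ν).PosSemidef := by
    have := Matrix.posSemidef_vecMulVec_self_star (R := ℝ) (n := Fin n) ν
    rw [star_trivial] at this
    exact (Matrix.PosSemidef.one.smul ha.le).add (this.smul hC)
  have hfac : a • (1 : Matrix (Fin n) (Fin n) ℝ) + C • Matrix.vecMulVec ν ν =
      a • (1 + Matrix.replicateCol Unit ((C / a) • ⇑ν) * Matrix.replicateRow Unit ν) := by
    rw [← Matrix.vecMulVec_eq, smul_add, Matrix.smul_vecMulVec, smul_smul,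
      mul_div_cancel₀ _ ha.ne']
  have hνν : (⇑ν) ⬝ᵥ (⇑ν) = 1 := by
    have := EuclideanSpace.real_norm_sq_eq ν
    rw [hν] at this
    simp only [dotProduct, ← sq]
    linarith
  rw [detPlus, if_pos hpsd, hfac, Matrix.det_smul, Matrix.det_one_add_replicateCol_mul_replicateRow,
    dotProduct_smul, hνν]
  simp

/-- On `Ω` the generalized Dirichlet problem is the interior equation; a local minimum relative to
the open set `Ω` is one relative to `closure Ω`. -/
lemma IsViscositySupersolution.interior {n : ℕ} {Ω : Set (EuclideanSpace ℝ (Fin n))}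
    (hΩ : IsOpen Ω) {f : EuclideanSpace ℝ (Fin n) → ℝ → EuclideanSpace ℝ (Fin n) → ℝ}
    {g w : EuclideanSpace ℝ (Fin n) → ℝ} (h : IsViscositySupersolution Ω f g w) :
    IsInteriorSupersolution Ω f w := by
  refine ⟨h.1, fun φ hφ x₀ hx₀ hmin => ?_⟩
  have hmin' := (hmin.isLocalMin (hΩ.mem_nhds hx₀)).on (closure Ω)
  simpa [MAUpper, hx₀] using h.2 φ hφ x₀ (subset_closure hx₀) hmin'

/-- **Supersolutions dominate the boundary data when a Lipschitz solution exists.** -/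
theorem supersolution_dominates_boundary_data
    {n : ℕ}
    (Ω : Set (EuclideanSpace ℝ (Fin n)))
    (hΩ_open : IsOpen Ω) (hΩ_bdd : Bornology.IsBounded Ω)
    (hΩ_conv : Convex ℝ Ω) (hΩ_uc : UniformlyConvexDomain Ω)
    (g : EuclideanSpace ℝ (Fin n) → ℝ) (hg : ContinuousOn g (frontier Ω))
    (f : EuclideanSpace ℝ (Fin n) → ℝ → EuclideanSpace ℝ (Fin n) → ℝ)
    (hf_cont : ContinuousOn
      (fun q : EuclideanSpace ℝ (Fin n) × ℝ × EuclideanSpace ℝ (Fin n) => f q.1 q.2.1 q.2.2)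
      ((closure Ω) ×ˢ (Set.univ ×ˢ Set.univ)))
    -- the classical comparison principle, assumed as a hypothesis
    (h_comparison : ∀ u' v' : EuclideanSpace ℝ (Fin n) → ℝ,
      (∃ M : ℝ, ∀ x ∈ closure Ω, |u' x| ≤ M) → IsInteriorSubsolution Ω f u' →
      (∃ M : ℝ, ∀ x ∈ closure Ω, |v' x| ≤ M) → IsInteriorSupersolution Ω f v' →
      ∀ x ∈ closure Ω,
        u' x - v' x ≤ sSup ((fun y => max (u' y - v' y) 0) '' frontier Ω))
    -- the convex Lipschitz continuous viscosity solution attaining the boundary data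
    (u : EuclideanSpace ℝ (Fin n) → ℝ)
    (hu_conv : ConvexOn ℝ (closure Ω) u)
    (hu_lip : ∃ K : NNReal, LipschitzOnWith K u (closure Ω))
    (hu_sub : IsInteriorSubsolution Ω f u)
    (hu_super : IsInteriorSupersolution Ω f u)
    (hu_bc : ∀ x ∈ frontier Ω, u x = g x)
    -- any bounded lower semicontinuous supersolution of the generalized Dirichlet problem
    (w : EuclideanSpace ℝ (Fin n) → ℝ)
    (hw_bdd : ∃ M : ℝ, ∀ x ∈ closure Ω, |w x| ≤ M)
    (hw_super : IsViscositySupersolution Ω f g w) :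
    ∀ x ∈ frontier Ω, g x ≤ w x := by
  obtain ⟨K, hK⟩ := hu_lip
  have hcpt : IsCompact (closure Ω) :=
    Metric.isCompact_of_isClosed_isBounded isClosed_closure hΩ_bdd.closure
  have hfcl : frontier Ω ⊆ closure Ω := frontier_subset_closure
  intro z hz
  by_contra! hlt
  obtain ⟨x₀, hx₀, hx₀min⟩ : ∃ x₀ ∈ frontier Ω, IsMinOn (fun x => w x + -g x) (frontier Ω) x₀ :=
    LowerSemicontinuousOn.exists_isMinOn ⟨z, hz⟩ (hcpt.of_isClosed_subset isClosed_frontier hfcl)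
      ((hw_super.1.mono hfcl).add hg.neg.lowerSemicontinuousOn)
  rw [isMinOn_iff] at hx₀min
  have hx₀lt : w x₀ < g x₀ := by linarith [hx₀min z hz]
  have hx₀cl := hfcl hx₀
  have hx₀Ω : x₀ ∉ Ω := fun h => by
    rw [hΩ_open.frontier_eq] at hx₀
    exact hx₀.2 h
  have hmin : ∀ x ∈ closure Ω, u x - w x ≤ u x₀ - w x₀ := fun x hx => by
    refine (h_comparison u w ?_ hu_sub hw_bdd (hw_super.interior hΩ_open) x hx).trans ?_
    · simpa only [Real.norm_eq_abs] using hcpt.exists_bound_of_continuousOn hK.continuousOn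
    · refine csSup_le (Set.Nonempty.image _ ⟨z, hz⟩) ?_
      rintro _ ⟨y, hy, rfl⟩
      have := hx₀min y hy
      rw [hu_bc x₀ hx₀]
      simp only [hu_bc y hy]
      exact max_le (by linarith) (by linarith)
  obtain ⟨p, hp⟩ := exists_subgradient hu_conv hK hx₀cl
  obtain ⟨ν, hν, hν_le⟩ := exists_unit_normal hΩ_open hΩ_conv (closure_nonempty_iff.1 ⟨x₀, hx₀cl⟩)
    hx₀Ω
  obtain ⟨α, hα, hαν⟩ := hΩ_uc x₀ hx₀ ν hν hν_le
  -- `C` is chosen so that `αⁿ(1 + C/α) = αⁿ + |F| + 1 > F`.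
  set F := f x₀ (w x₀) (p + ν) with hF
  set C := α * ((|F| + 1) / α ^ n) with hCdef
  have hC : 0 ≤ C := by positivity
  have htest : IsLocalMinOn (fun x => w x - testFn (p + ν) ν x₀ α C x) (closure Ω) x₀ := by
    have hsmall : ∀ᶠ x in nhds x₀, C * |⟪ν, x - x₀⟫| < 1 := by
      have hcont : Continuous fun x => C * |⟪ν, x - x₀⟫| := by fun_prop
      exact hcont.continuousAt.eventually_lt continuousAt_const (by simp)
    filter_upwards [hsmall.filter_mono nhdsWithin_le_nhds, self_mem_nhdsWithin] with x hx hxcl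
    have h1 := linear_add_quadratic_nonpos hα (hαν x hxcl) hx.le
    have h2 := hp x hxcl
    have h3 := hmin x hxcl
    simp only [testFn, inner_add_left, sub_self, inner_zero_right, norm_zero]
    linarith
  have hsup := hw_super.2 _ (testFn_contDiff (p + ν) ν x₀ α C) x₀ hx₀cl htest
  rw [MAUpper, if_neg hx₀Ω, testFn_gradient, testFn_hessian, detPlus_rank_one ν hν hα hC,
    ← hF] at hsup
  have hdet : α ^ n * (1 + C / α) = α ^ n + (|F| + 1) := by
    rw [hCdef]
    field_simp
  rw [hdet] at hsup
  have hαn : 0 < α ^ n := by positivity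
  refine absurd hsup (not_le.2 (max_lt (by linarith) ?_))
  linarith [le_abs_self F]
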